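/- arXiv:1503.01748 — 2 statements merged into one kernel-verified Lean document; each statement's English description precedes it below -/
import Mathlib

section
/- Growth estimates in the upper half-plane (equations (26)–(27)): (i) There exists C > 0 such that for all λ ∈ ℂ with Im λ ≥ 0 and all x ∈ [0,T]: ‖Z₁(x,λ)‖ ≤ C e^{Im λ · (T − x)}. (ii) For every δ > 0 there exists C_δ > 0 such that for all λ with Im λ ≥ 0 whose distance from every zero of Δ₁ is at least δ (so that in particular Δ₁(λ) ≠ 0 and Φ(·,λ) is defined) and all x ∈ [0,T]: ‖Φ(x,λ)‖ ≤ C_δ e^{−Im λ · x}. -/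
open MeasureTheory Set Filter

noncomputable section

/-- A function `f : ℝ → ℂ` is absolutely continuous on `[0, T]`:
it is the indefinite integral of an integrable function. -/
def AbsContOn (f : ℝ → ℂ) (T : ℝ) : Prop :=
  ∃ g : ℝ → ℂ, IntervalIntegrable g volume 0 T ∧
    ∀ x ∈ Icc (0 : ℝ) T, f x = f 0 + ∫ t in (0 : ℝ)..x, g t

/-- `y : ℝ → ℂ × ℂ` is a solution of the Dirac system `B y' + Ω y = λ y` on `[0, T]`,
where `B = ![![0,1],![-1,0]]` and `Ω = ![![p,q],![q,-p]]`:  `y` is continuous on `[0,T]`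
and satisfies the equivalent system of integral equations coming from
`y₁' = q y₁ - (p + λ) y₂`, `y₂' = (λ - p) y₁ - q y₂`
(this encodes: `y` is absolutely continuous and the ODE holds a.e.). -/
def IsDiracSol (p q : ℝ → ℂ) (T : ℝ) (lam : ℂ) (y : ℝ → ℂ × ℂ) : Prop :=
  ContinuousOn y (Icc (0 : ℝ) T) ∧
    ∀ x ∈ Icc (0 : ℝ) T,
      ((y x).1 = (y 0).1 + ∫ t in (0 : ℝ)..x, (q t * (y t).1 - (p t + lam) * (y t).2)) ∧
      ((y x).2 = (y 0).2 + ∫ t in (0 : ℝ)..x, ((lam - p t) * (y t).1 - q t * (y t).2))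

/-- A nonlocal linear form `U(y) = ∫_{[0,T]} y₁ dμ₁ + ∫_{[0,T]} y₂ dμ₂`, where the complex
Borel measures `μᵢ` are encoded (via Radon–Nikodym) as integrable complex densities `wᵢ`
with respect to finite positive measures. -/
structure NonlocalForm (T : ℝ) where
  μ₁ : Measure ℝ
  μ₂ : Measure ℝ
  finite₁ : IsFiniteMeasure μ₁
  finite₂ : IsFiniteMeasure μ₂
  w₁ : ℝ → ℂ
  w₂ : ℝ → ℂ
  int₁ : Integrable w₁ μ₁
  int₂ : Integrable w₂ μ₂

namespace NonlocalForm

variable {T : ℝ}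

/-- The value `U(y)` of the nonlocal form on a function `y`. -/
def app (U : NonlocalForm T) (y : ℝ → ℂ × ℂ) : ℂ :=
  (∫ t in Icc (0 : ℝ) T, U.w₁ t * (y t).1 ∂U.μ₁) +
    ∫ t in Icc (0 : ℝ) T, U.w₂ t * (y t).2 ∂U.μ₂

/-- `h₁ = μ₁({0})`, the mass of the first complex measure at `0`. -/
def h₁ (U : NonlocalForm T) : ℂ := U.w₁ 0 * ((U.μ₁ {0}).toReal : ℂ)

/-- `h₂ = μ₂({0})`, the mass of the second complex measure at `0`. -/
def h₂ (U : NonlocalForm T) : ℂ := U.w₂ 0 * ((U.μ₂ {0}).toReal : ℂ)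

end NonlocalForm

/-- A two-point (local) linear form `y ↦ c₁ y₁(t) + c₂ y₂(t)`. -/
def locForm (c₁ c₂ : ℂ) (t : ℝ) (y : ℝ → ℂ × ℂ) : ℂ := c₁ * (y t).1 + c₂ * (y t).2

/-- `f` and `g` have the same order of zero at `z` (order possibly `0` or `∞`):
for every `n`, the first `n` derivatives of `f` vanish at `z` iff
the first `n` derivatives of `g` do. -/
def ZeroOrderEq (f g : ℂ → ℂ) (z : ℂ) : Prop :=
  ∀ n : ℕ, (∀ k < n, iteratedDeriv k f z = 0) ↔ (∀ k < n, iteratedDeriv k g z = 0)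

/-- The filter of `λ → ∞` within the sector `arg λ ∈ [δ, π - δ]`. -/
def sectorFilter (δ : ℝ) : Filter ℂ :=
  Filter.comap (fun lam : ℂ => ‖lam‖) Filter.atTop ⊓
    Filter.principal {lam : ℂ | Complex.arg lam ∈ Icc δ (Real.pi - δ)}

/-- Pointwise form of the Dirac system. -/
def DSol (p q : ℝ → ℂ) (T : ℝ) (lam : ℂ) (y : ℝ → ℂ × ℂ) : Prop :=
  ∀ x ∈ Icc (0 : ℝ) T,
    HasDerivAt (fun t => (y t).1) (q x * (y x).1 - (p x + lam) * (y x).2) x ∧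
    HasDerivAt (fun t => (y t).2) ((lam - p x) * (y x).1 - q x * (y x).2) x

lemma AbsContOn.continuousOn {f : ℝ → ℂ} {T : ℝ} (hT : 0 < T) (hf : AbsContOn f T) :
    ContinuousOn f (Icc 0 T) := by
  obtain ⟨g, hg, h⟩ := hf
  have h1 : ContinuousOn (fun x => ∫ t in (0 : ℝ)..x, g t) (uIcc 0 T) :=
    intervalIntegral.continuousOn_primitive_interval
      ((intervalIntegrable_iff' ).1 hg)
  rw [uIcc_of_le hT.le] at h1
  exact (continuousOn_const.add h1).congr h

lemma exists_DSol {p q : ℝ → ℂ} {T : ℝ} (hT : 0 < T) (hp : ContinuousOn p (Icc 0 T))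
    (hq : ContinuousOn q (Icc 0 T)) {lam : ℂ} {y : ℝ → ℂ × ℂ} (hy : IsDiracSol p q T lam y) :
    ∃ z, DSol p q T lam z ∧ ∀ x ∈ Icc (0 : ℝ) T, y x = z x := by
  obtain ⟨hc, he⟩ := hy
  set e : ℝ → ℝ := fun x => (projIcc 0 T hT.le x : ℝ) with hedef
  have hec : Continuous e := continuous_subtype_val.comp continuous_projIcc
  have hem : ∀ x, e x ∈ Icc (0 : ℝ) T := fun x => (projIcc 0 T hT.le x).2
  have hee : ∀ x ∈ Icc (0 : ℝ) T, e x = x := fun x hx => by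
    simp only [hedef, projIcc_of_mem hT.le hx]
  have cc : ∀ {E : Type} [TopologicalSpace E] {f : ℝ → E}, ContinuousOn f (Icc 0 T) →
      Continuous (fun x => f (e x)) := fun h => h.comp_continuous hec hem
  have hp' := cc hp
  have hq' := cc hq
  have hy' := cc hc
  have hF : Continuous (fun t => q (e t) * (y (e t)).1 - (p (e t) + lam) * (y (e t)).2) :=
    (hq'.mul hy'.fst).sub ((hp'.add continuous_const).mul hy'.snd)
  have hG : Continuous (fun t => (lam - p (e t)) * (y (e t)).1 - q (e t) * (y (e t)).2) :=
    ((continuous_const.sub hp').mul hy'.fst).sub (hq'.mul hy'.snd)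
  have hswap : ∀ x ∈ Icc (0 : ℝ) T, ∀ H : ℝ → ℂ,
      ∫ t in (0 : ℝ)..x, H (e t) = ∫ t in (0 : ℝ)..x, H t := by
    intro x hx H
    apply intervalIntegral.integral_congr
    intro t ht
    rw [uIcc_of_le hx.1] at ht
    simp only [hee t ⟨ht.1, ht.2.trans hx.2⟩]
  set z : ℝ → ℂ × ℂ := fun x =>
    ((y 0).1 + ∫ t in (0 : ℝ)..x, (q (e t) * (y (e t)).1 - (p (e t) + lam) * (y (e t)).2),
     (y 0).2 + ∫ t in (0 : ℝ)..x, ((lam - p (e t)) * (y (e t)).1 - q (e t) * (y (e t)).2)) with hz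
  have hyz : ∀ x ∈ Icc (0 : ℝ) T, y x = z x := by
    intro x hx
    apply Prod.ext
    · rw [(he x hx).1, hz]
      simp only
      rw [hswap x hx (fun t => q t * (y t).1 - (p t + lam) * (y t).2)]
    · rw [(he x hx).2, hz]
      simp only
      rw [hswap x hx (fun t => (lam - p t) * (y t).1 - q t * (y t).2)]
  refine ⟨z, fun x hx => ?_, hyz⟩
  rw [← hyz x hx]
  constructor
  · have := (hF.integral_hasStrictDerivAt 0 x).hasDerivAt.const_add (y 0).1
    simpa only [hee x hx] using this
  · have := (hG.integral_hasStrictDerivAt 0 x).hasDerivAt.const_add (y 0).2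
    simpa only [hee x hx] using this

namespace DSol
variable {p q : ℝ → ℂ} {T : ℝ} {lam : ℂ} {y z : ℝ → ℂ × ℂ}

lemma cont1 (h : DSol p q T lam y) : ContinuousOn (fun t => (y t).1) (Icc 0 T) :=
  fun x hx => (h x hx).1.continuousAt.continuousWithinAt

lemma cont2 (h : DSol p q T lam y) : ContinuousOn (fun t => (y t).2) (Icc 0 T) :=
  fun x hx => (h x hx).2.continuousAt.continuousWithinAt

lemma cont (h : DSol p q T lam y) : ContinuousOn y (Icc 0 T) := h.cont1.prodMk h.cont2

lemma comb (hy : DSol p q T lam y) (hz : DSol p q T lam z) (a b : ℂ) :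
    DSol p q T lam (fun x => a • y x + b • z x) := by
  intro x hx
  constructor
  · have := ((hy x hx).1.const_mul a).add ((hz x hx).1.const_mul b)
    refine this.congr_deriv ?_
    simp; ring
  · have := ((hy x hx).2.const_mul a).add ((hz x hx).2.const_mul b)
    refine this.congr_deriv ?_
    simp; ring

end DSol

lemma gron {E E' : ℝ → ℝ} {T k : ℝ} (hE : ∀ x ∈ Icc (0 : ℝ) T, HasDerivAt E (E' x) x)
    (hb : ∀ x ∈ Icc (0 : ℝ) T, |E' x| ≤ k * E x) {x z : ℝ} (hx : x ∈ Icc (0 : ℝ) T)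
    (hz : z ∈ Icc (0 : ℝ) T) : E x ≤ E z * Real.exp (k * |x - z|) := by
  have key : ∀ s : ℝ, ∀ x ∈ Icc (0 : ℝ) T, HasDerivAt (fun t => E t * Real.exp (s * t))
      ((E' x + s * E x) * Real.exp (s * x)) x := by
    intro s x hx
    have := (hE x hx).mul (((hasDerivAt_id x).const_mul s).exp)
    refine this.congr_deriv ?_
    simp; ring
  have hcon : ∀ s : ℝ, ContinuousOn (fun t => E t * Real.exp (s * t)) (Icc 0 T) := fun s x hx =>
    (key s x hx).continuousAt.continuousWithinAt
  rcases le_total x z with hxz | hxz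
  · have mono : MonotoneOn (fun t => E t * Real.exp (k * t)) (Icc 0 T) := by
      apply monotoneOn_of_deriv_nonneg (convex_Icc _ _) (hcon k)
      · intro t ht
        rw [interior_Icc] at ht
        exact (key k t (Ioo_subset_Icc_self ht)).differentiableAt.differentiableWithinAt
      · intro t ht
        rw [interior_Icc] at ht
        have ht' := Ioo_subset_Icc_self ht
        rw [(key k t ht').deriv]
        have := (abs_le.1 (hb t ht')).1
        apply mul_nonneg (by linarith) (Real.exp_pos _).le
    have h1 := mono hx hz hxz
    simp only at h1
    rw [abs_of_nonpos (by linarith)]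
    rw [show k * -(x - z) = k * z - k * x by ring, Real.exp_sub, ← mul_div_assoc,
      le_div_iff₀ (Real.exp_pos _)]
    exact h1
  · have mono : AntitoneOn (fun t => E t * Real.exp (-k * t)) (Icc 0 T) := by
      apply antitoneOn_of_deriv_nonpos (convex_Icc _ _) (hcon (-k))
      · intro t ht
        rw [interior_Icc] at ht
        exact (key (-k) t (Ioo_subset_Icc_self ht)).differentiableAt.differentiableWithinAt
      · intro t ht
        rw [interior_Icc] at ht
        have ht' := Ioo_subset_Icc_self ht
        rw [(key (-k) t ht').deriv]
        have := (abs_le.1 (hb t ht')).2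
        apply mul_nonpos_of_nonpos_of_nonneg (by linarith) (Real.exp_pos _).le
    have h1 := mono hz hx hxz
    simp only at h1
    rw [abs_of_nonneg (by linarith)]
    rw [show k * (x - z) = (-k * z) - (-k * x) by ring, Real.exp_sub, ← mul_div_assoc,
      le_div_iff₀ (Real.exp_pos _)]
    exact h1

lemma DSol.energy {p q : ℝ → ℂ} {T M : ℝ} (hM : ∀ x ∈ Icc (0 : ℝ) T, ‖p x‖ + ‖q x‖ ≤ M)
    {lam : ℂ} {y : ℝ → ℂ × ℂ} (hy : DSol p q T lam y) {x z : ℝ} (hx : x ∈ Icc (0 : ℝ) T)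
    (hz : z ∈ Icc (0 : ℝ) T) :
    ‖(y x).1‖ ^ 2 + ‖(y x).2‖ ^ 2 ≤
      (‖(y z).1‖ ^ 2 + ‖(y z).2‖ ^ 2) * Real.exp (2 * (|lam.im| + M) * |x - z|) := by
  refine gron (E := fun x => ‖(y x).1‖ ^ 2 + ‖(y x).2‖ ^ 2)
    (fun x hx => (hy x hx).1.norm_sq.add (hy x hx).2.norm_sq) ?_ hx hz
  intro t ht
  have hm := hM t ht
  have hp : |(p t).re| ≤ ‖p t‖ := Complex.abs_re_le_norm _
  have hq : |(q t).re| ≤ ‖q t‖ := Complex.abs_re_le_norm _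
  set a := (y t).1
  set b := (y t).2
  have e1 : 2 * inner ℝ a (q t * a - (p t + lam) * b) + 2 * inner ℝ b ((lam - p t) * a - q t * b)
      = 2 * ((q t).re * (‖a‖ ^ 2 - ‖b‖ ^ 2) + (p t).re * (-2 * (a.re * b.re + a.im * b.im))
        + lam.im * (-2 * (b.re * a.im - b.im * a.re))) := by
    simp only [Complex.inner, Complex.sq_norm, Complex.normSq_apply]
    simp
    ring
  rw [e1]
  have hE : 0 ≤ ‖a‖ ^ 2 + ‖b‖ ^ 2 := by positivity
  have na : ‖a‖ ^ 2 = a.re * a.re + a.im * a.im := by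
    rw [Complex.sq_norm, Complex.normSq_apply]
  have nb : ‖b‖ ^ 2 = b.re * b.re + b.im * b.im := by
    rw [Complex.sq_norm, Complex.normSq_apply]
  have b1 : |‖a‖ ^ 2 - ‖b‖ ^ 2| ≤ ‖a‖ ^ 2 + ‖b‖ ^ 2 := by
    rw [abs_le]; constructor <;> nlinarith [sq_nonneg ‖a‖, sq_nonneg ‖b‖]
  have b2 : |-2 * (a.re * b.re + a.im * b.im)| ≤ ‖a‖ ^ 2 + ‖b‖ ^ 2 := by
    rw [na, nb, abs_le]; constructor <;>
    nlinarith [sq_nonneg (a.re + b.re), sq_nonneg (a.re - b.re), sq_nonneg (a.im + b.im),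
      sq_nonneg (a.im - b.im)]
  have b3 : |-2 * (b.re * a.im - b.im * a.re)| ≤ ‖a‖ ^ 2 + ‖b‖ ^ 2 := by
    rw [na, nb, abs_le]; constructor <;>
    nlinarith [sq_nonneg (a.im + b.re), sq_nonneg (a.im - b.re), sq_nonneg (a.re + b.im),
      sq_nonneg (a.re - b.im)]
  rw [abs_mul, abs_two, mul_assoc]
  refine mul_le_mul_of_nonneg_left ?_ (by norm_num)
  refine (abs_add_three _ _ _).trans ?_
  rw [abs_mul (q t).re, abs_mul (p t).re, abs_mul lam.im]
  calc _ ≤ |(q t).re| * (‖a‖ ^ 2 + ‖b‖ ^ 2) + |(p t).re| * (‖a‖ ^ 2 + ‖b‖ ^ 2)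
        + |lam.im| * (‖a‖ ^ 2 + ‖b‖ ^ 2) := by gcongr
    _ = (|(q t).re| + |(p t).re| + |lam.im|) * (‖a‖ ^ 2 + ‖b‖ ^ 2) := by ring
    _ ≤ _ := by
      apply mul_le_mul_of_nonneg_right _ hE
      linarith

/-- sup-norm consequence of the energy estimate -/
lemma DSol.norm_le {p q : ℝ → ℂ} {T M : ℝ} (hM : ∀ x ∈ Icc (0 : ℝ) T, ‖p x‖ + ‖q x‖ ≤ M)
    {lam : ℂ} {y : ℝ → ℂ × ℂ} (hy : DSol p q T lam y) {x z : ℝ} (hx : x ∈ Icc (0 : ℝ) T)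
    (hz : z ∈ Icc (0 : ℝ) T) {s : ℝ} (hs : 0 ≤ s) (hyz : ‖(y z).1‖ ^ 2 + ‖(y z).2‖ ^ 2 ≤ s ^ 2) :
    ‖y x‖ ≤ s * Real.exp ((|lam.im| + M) * |x - z|) := by
  have h := hy.energy hM hx hz
  have h2 : (‖(y z).1‖ ^ 2 + ‖(y z).2‖ ^ 2) * Real.exp (2 * (|lam.im| + M) * |x - z|)
      ≤ (s * Real.exp ((|lam.im| + M) * |x - z|)) ^ 2 := by
    rw [mul_pow, ← Real.exp_nat_mul]
    push_cast
    rw [← mul_assoc 2]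
    gcongr
  have h3 := h.trans h2
  rw [Prod.norm_def]
  refine max_le ?_ ?_
  · apply abs_le_of_sq_le_sq' _ (by positivity) |>.2
    nlinarith [sq_nonneg ‖(y x).2‖]
  · apply abs_le_of_sq_le_sq' _ (by positivity) |>.2
    nlinarith [sq_nonneg ‖(y x).1‖]
lemma contOn_comb {y z : ℝ → ℂ × ℂ} {s : Set ℝ} (hy : ContinuousOn y s) (hz : ContinuousOn z s)
    (c : ℂ) : ContinuousOn (fun x => y x + c • z x) s := by fun_prop

/-- the bilinear integral `∫₀ˣ ⟨y, A⟩` -/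
def pairInt (y A : ℝ → ℂ × ℂ) (x : ℝ) : ℂ :=
  ∫ t in (0 : ℝ)..x, ((y t).1 * (A t).1 + (y t).2 * (A t).2)

lemma pair_cont {T : ℝ} {y A : ℝ → ℂ × ℂ} (hy : ContinuousOn y (Icc 0 T))
    (hA : ContinuousOn A (Icc 0 T)) :
    ContinuousOn (fun t => (y t).1 * (A t).1 + (y t).2 * (A t).2) (Icc 0 T) :=
  (hy.fst.mul hA.fst).add (hy.snd.mul hA.snd)

lemma pair_ii {T : ℝ} {y A : ℝ → ℂ × ℂ} (hy : ContinuousOn y (Icc 0 T))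
    (hA : ContinuousOn A (Icc 0 T)) {x : ℝ} (hx : x ∈ Icc (0 : ℝ) T) :
    IntervalIntegrable (fun t => (y t).1 * (A t).1 + (y t).2 * (A t).2) volume 0 x := by
  apply ContinuousOn.intervalIntegrable
  rw [uIcc_of_le hx.1]
  exact (pair_cont hy hA).mono (Icc_subset_Icc_right hx.2)

lemma pairInt_sub {T : ℝ} {y z A : ℝ → ℂ × ℂ} (hy : ContinuousOn y (Icc 0 T))
    (hz : ContinuousOn z (Icc 0 T))
    (hA : ContinuousOn A (Icc 0 T)) {x : ℝ} (hx : x ∈ Icc (0 : ℝ) T) :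
    pairInt y A x - pairInt z A x = pairInt (fun t => y t - z t) A x := by
  unfold pairInt
  rw [← intervalIntegral.integral_sub (pair_ii hy hA hx) (pair_ii hz hA hx)]
  apply intervalIntegral.integral_congr
  intro t _
  simp
  ring

lemma pairInt_norm {T N s : ℝ} {y A : ℝ → ℂ × ℂ} (hN : ∀ x ∈ Icc (0 : ℝ) T, ‖A x‖ ≤ N)
    (hs : ∀ x ∈ Icc (0 : ℝ) T, ‖y x‖ ≤ s) {x : ℝ} (hx : x ∈ Icc (0 : ℝ) T) :
    ‖pairInt y A x‖ ≤ 2 * N * s * T := by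
  have hN0 : 0 ≤ N := (norm_nonneg _).trans (hN x hx)
  have hs0 : 0 ≤ s := (norm_nonneg _).trans (hs x hx)
  have := intervalIntegral.norm_integral_le_of_norm_le_const (a := 0) (b := x) (C := 2 * N * s)
    (f := fun t => (y t).1 * (A t).1 + (y t).2 * (A t).2) ?_
  · refine this.trans ?_
    rw [sub_zero, abs_of_nonneg hx.1]
    exact mul_le_mul_of_nonneg_left hx.2 (by positivity)
  · intro t ht
    rw [uIoc_of_le hx.1] at ht
    have ht' : t ∈ Icc (0 : ℝ) T := ⟨ht.1.le, ht.2.trans hx.2⟩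
    have h1 := (norm_fst_le (y t)).trans (hs t ht')
    have h2 := (norm_snd_le (y t)).trans (hs t ht')
    have h3 := (norm_fst_le (A t)).trans (hN t ht')
    have h4 := (norm_snd_le (A t)).trans (hN t ht')
    refine (norm_add_le _ _).trans ?_
    rw [norm_mul, norm_mul]
    have h5 := mul_le_mul h1 h3 (norm_nonneg _) hs0
    have h6 := mul_le_mul h2 h4 (norm_nonneg _) hs0
    linarith

/-- variation of constants operator -/
def Rop (A B y : ℝ → ℂ × ℂ) (x : ℝ) : ℂ × ℂ :=
  (-(pairInt y B x)) • A x + (pairInt y A x) • B x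

lemma Rop_norm {T N s : ℝ} {y A B : ℝ → ℂ × ℂ} (hA : ∀ x ∈ Icc (0 : ℝ) T, ‖A x‖ ≤ N)
    (hB : ∀ x ∈ Icc (0 : ℝ) T, ‖B x‖ ≤ N)
    (hs : ∀ x ∈ Icc (0 : ℝ) T, ‖y x‖ ≤ s) {x : ℝ} (hx : x ∈ Icc (0 : ℝ) T) :
    ‖Rop A B y x‖ ≤ 4 * N ^ 2 * T * s := by
  have hN0 : 0 ≤ N := (norm_nonneg _).trans (hA x hx)
  have hs0 : 0 ≤ s := (norm_nonneg _).trans (hs x hx)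
  have hT : 0 ≤ T := hx.1.trans hx.2
  unfold Rop
  refine (norm_add_le _ _).trans ?_
  rw [norm_smul, norm_smul, norm_neg]
  have h5 := mul_le_mul (pairInt_norm hB hs hx) (hA x hx) (norm_nonneg _) (by positivity)
  have h6 := mul_le_mul (pairInt_norm hA hs hx) (hB x hx) (norm_nonneg _) (by positivity)
  linarith

lemma Rop_sub {T : ℝ} {y z A B : ℝ → ℂ × ℂ} (hy : ContinuousOn y (Icc 0 T))
    (hz : ContinuousOn z (Icc 0 T)) (hA : ContinuousOn A (Icc 0 T))
    (hB : ContinuousOn B (Icc 0 T)) {x : ℝ} (hx : x ∈ Icc (0 : ℝ) T) :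
    Rop A B y x - Rop A B z x = Rop A B (fun t => y t - z t) x := by
  unfold Rop
  rw [← pairInt_sub hy hz hA hx, ← pairInt_sub hy hz hB hx]
  module

lemma pairInt_cont {T : ℝ} (hT : 0 < T) {y A : ℝ → ℂ × ℂ} (hy : ContinuousOn y (Icc 0 T))
    (hA : ContinuousOn A (Icc 0 T)) : ContinuousOn (pairInt y A) (Icc 0 T) := by
  have := intervalIntegral.continuousOn_primitive_interval (μ := volume) (a := 0) (b := T)
    (f := fun t => (y t).1 * (A t).1 + (y t).2 * (A t).2)
    ((intervalIntegrable_iff').1 (pair_ii hy hA ⟨hT.le, le_rfl⟩))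
  rwa [uIcc_of_le hT.le] at this

lemma Rop_cont {T : ℝ} (hT : 0 < T) {y A B : ℝ → ℂ × ℂ} (hy : ContinuousOn y (Icc 0 T))
    (hA : ContinuousOn A (Icc 0 T)) (hB : ContinuousOn B (Icc 0 T)) :
    ContinuousOn (Rop A B y) (Icc 0 T) :=
  ((pairInt_cont hT hy hB).neg.smul hA).add ((pairInt_cont hT hy hA).smul hB)

lemma DSol.wronsk {p q : ℝ → ℂ} {T : ℝ} {lam mu : ℂ} {y B : ℝ → ℂ × ℂ} (hy : DSol p q T mu y)
    (hB : DSol p q T lam B) {x : ℝ} (hx : x ∈ Icc (0 : ℝ) T) :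
    (y x).1 * (B x).2 - (y x).2 * (B x).1 =
      (y 0).1 * (B 0).2 - (y 0).2 * (B 0).1 - (mu - lam) * pairInt y B x := by
  have hd : ∀ t ∈ Icc (0 : ℝ) T, HasDerivAt (fun t => (y t).1 * (B t).2 - (y t).2 * (B t).1)
      (-(mu - lam) * ((y t).1 * (B t).1 + (y t).2 * (B t).2)) t := by
    intro t ht
    have h1 := ((hy t ht).1.mul (hB t ht).2).sub ((hy t ht).2.mul (hB t ht).1)
    refine h1.congr_deriv ?_
    ring
  have := intervalIntegral.integral_eq_sub_of_hasDerivAt (a := 0) (b := x)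
    (f := fun t => (y t).1 * (B t).2 - (y t).2 * (B t).1)
    (fun t ht => by
      rw [uIcc_of_le hx.1] at ht
      exact hd t ⟨ht.1, ht.2.trans hx.2⟩)
    ((pair_ii hy.cont hB.cont hx).const_mul _)
  rw [intervalIntegral.integral_const_mul] at this
  unfold pairInt
  linear_combination -this

lemma DSol.varconst {p q : ℝ → ℂ} {T : ℝ} {lam mu : ℂ} {y A B : ℝ → ℂ × ℂ} (hy : DSol p q T mu y)
    (hA : DSol p q T lam A) (hB : DSol p q T lam B) (hA0 : A 0 = (1, 0)) (hB0 : B 0 = (0, 1))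
    {x : ℝ} (hx : x ∈ Icc (0 : ℝ) T) :
    y x = (y 0).1 • A x + (y 0).2 • B x + (mu - lam) • Rop A B y x := by
  have h1 := hA.wronsk hB hx
  have h2 := hy.wronsk hA hx
  have h3 := hy.wronsk hB hx
  simp only [hA0, hB0, sub_self, zero_mul, mul_zero, mul_one, sub_zero, zero_sub] at h1 h2 h3
  unfold Rop
  apply Prod.ext
  · simp only [Prod.fst_add, Prod.smul_fst, smul_eq_mul]
    linear_combination (-(y x).1) * h1 + (A x).1 * h3 - (B x).1 * h2
  · simp only [Prod.snd_add, Prod.smul_snd, smul_eq_mul]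
    linear_combination (-(y x).2) * h1 + (A x).2 * h3 - (B x).2 * h2

/-- bounded linear functional on continuous functions on `[0,T]` -/
structure GoodFun (T : ℝ) (L : (ℝ → ℂ × ℂ) → ℂ) : Prop where
  lin : ∀ y z, ContinuousOn y (Icc 0 T) → ContinuousOn z (Icc 0 T) → ∀ c : ℂ,
    L (fun x => y x + c • z x) = L y + c * L z
  bdd : ∃ C, 0 ≤ C ∧ ∀ y s, ContinuousOn y (Icc 0 T) → (∀ x ∈ Icc (0 : ℝ) T, ‖y x‖ ≤ s) →
    ‖L y‖ ≤ C * s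

lemma GoodFun.congr {T : ℝ} {L : (ℝ → ℂ × ℂ) → ℂ} (hL : GoodFun T L) {y z : ℝ → ℂ × ℂ}
    (hy : ContinuousOn y (Icc 0 T)) (h : ∀ x ∈ Icc (0 : ℝ) T, y x = z x) : L y = L z := by
  have hz : ContinuousOn z (Icc 0 T) := hy.congr fun x hx => (h x hx).symm
  obtain ⟨C, hC, hb⟩ := hL.bdd
  have h1 := hL.lin y z hy hz (-1)
  have h2 := hb (fun x => y x + (-1 : ℂ) • z x) 0 (contOn_comb hy hz _)
    (fun x hx => by simp [h x hx])
  rw [mul_zero, norm_le_zero_iff, h1] at h2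
  linear_combination h2

open Topology in
lemma GoodFun.differentiable {p q : ℝ → ℂ} {T M : ℝ} (hT : 0 < T) (hM0 : 0 ≤ M)
    (hM : ∀ x ∈ Icc (0 : ℝ) T, ‖p x‖ + ‖q x‖ ≤ M)
    {L : (ℝ → ℂ × ℂ) → ℂ} (hL : GoodFun T L) {Y A B : ℂ → ℝ → ℂ × ℂ}
    (hY : ∀ lam, DSol p q T lam (Y lam)) {c : ℂ × ℂ} (hY0 : ∀ lam, Y lam 0 = c)
    (hA : ∀ lam, DSol p q T lam (A lam)) (hA0 : ∀ lam, A lam 0 = (1, 0))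
    (hB : ∀ lam, DSol p q T lam (B lam)) (hB0 : ∀ lam, B lam 0 = (0, 1)) :
    Differentiable ℂ (fun lam => L (Y lam)) := by
  intro lam
  obtain ⟨C, hC, hb⟩ := hL.bdd
  have h0T : (0 : ℝ) ∈ Icc 0 T := ⟨le_rfl, hT.le⟩
  set N := Real.exp ((|lam.im| + M) * T)
  have hAN : ∀ x ∈ Icc (0 : ℝ) T, ‖A lam x‖ ≤ N := by
    intro x hx
    have := (hA lam).norm_le hM hx h0T zero_le_one (by simp [hA0])
    rw [one_mul, sub_zero, abs_of_nonneg hx.1] at this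
    exact this.trans (Real.exp_le_exp.2 (mul_le_mul_of_nonneg_left hx.2 (by positivity)))
  have hBN : ∀ x ∈ Icc (0 : ℝ) T, ‖B lam x‖ ≤ N := by
    intro x hx
    have := (hB lam).norm_le hM hx h0T zero_le_one (by simp [hB0])
    rw [one_mul, sub_zero, abs_of_nonneg hx.1] at this
    exact this.trans (Real.exp_le_exp.2 (mul_le_mul_of_nonneg_left hx.2 (by positivity)))
  set S := ‖c.1‖ + ‖c.2‖ with hS
  set G := S * Real.exp ((|lam.im| + 1 + M) * T)
  have hYG : ∀ mu : ℂ, ‖mu - lam‖ ≤ 1 → ∀ x ∈ Icc (0 : ℝ) T, ‖Y mu x‖ ≤ G := by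
    intro mu hmu x hx
    have := (hY mu).norm_le hM hx h0T (s := S) (by positivity)
      (by rw [hY0, hS]; nlinarith [norm_nonneg c.1, norm_nonneg c.2])
    rw [sub_zero, abs_of_nonneg hx.1] at this
    refine this.trans ?_
    have h1 : |mu.im| ≤ |lam.im| + 1 := by
      have h2 := (Complex.abs_im_le_norm (mu - lam)).trans hmu
      have h3 := abs_add_le (mu - lam).im lam.im
      rw [Complex.sub_im] at h2 h3
      rw [sub_add_cancel] at h3
      linarith
    have hS0 : 0 ≤ S := by positivity
    refine mul_le_mul_of_nonneg_left (Real.exp_le_exp.2 ?_) hS0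
    have h4 := hx.1
    have h5 := hx.2
    calc (|mu.im| + M) * x ≤ (|lam.im| + 1 + M) * x := by gcongr
      _ ≤ _ := by gcongr
  have hvar : ∀ mu, ∀ x ∈ Icc (0 : ℝ) T,
      Y mu x - Y lam x = (mu - lam) • Rop (A lam) (B lam) (Y mu) x := by
    intro mu x hx
    have h1 := (hY mu).varconst (hA lam) (hB lam) (hA0 lam) (hB0 lam) hx
    have h2 := (hY lam).varconst (hA lam) (hB lam) (hA0 lam) (hB0 lam) hx
    rw [h1, h2, hY0, hY0, sub_self, zero_smul]
    module
  set k := 4 * N ^ 2 * T with hk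
  have hk0 : 0 ≤ k := by positivity
  have main : ∀ mu : ℂ, ‖mu - lam‖ ≤ 1 →
      ‖L (Y mu) - L (Y lam) - (mu - lam) • L (Rop (A lam) (B lam) (Y lam))‖
        ≤ (C * (k * (k * G))) * ‖mu - lam‖ ^ 2 := by
    intro mu hmu
    have hRc := Rop_cont hT (hY lam).cont (hA lam).cont (hB lam).cont
    have hc1 : ContinuousOn (fun x => Y mu x + (-1 : ℂ) • Y lam x) (Icc 0 T) :=
      contOn_comb (hY mu).cont (hY lam).cont _
    have e1 := hL.lin _ _ (hY mu).cont (hY lam).cont (-1)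
    have e2 := hL.lin _ _ hc1 hRc (-(mu - lam))
    have e3 : L (Y mu) - L (Y lam) - (mu - lam) • L (Rop (A lam) (B lam) (Y lam)) =
        L (fun x => (Y mu x + (-1 : ℂ) • Y lam x) + (-(mu - lam)) • Rop (A lam) (B lam) (Y lam) x) := by
      rw [e2, e1, smul_eq_mul]; ring
    rw [e3]
    refine (hb _ (‖mu - lam‖ * (k * (‖mu - lam‖ * (k * G)))) (contOn_comb hc1 hRc _) ?_).trans_eq
      (by ring)
    intro x hx
    have e4 : (Y mu x + (-1 : ℂ) • Y lam x) + (-(mu - lam)) • Rop (A lam) (B lam) (Y lam) x =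
        (mu - lam) • Rop (A lam) (B lam) (fun t => Y mu t - Y lam t) x := by
      rw [← Rop_sub (hY mu).cont (hY lam).cont (hA lam).cont (hB lam).cont hx, smul_sub,
        ← hvar mu x hx]
      module
    rw [e4, norm_smul]
    refine mul_le_mul_of_nonneg_left (Rop_norm hAN hBN ?_ hx) (norm_nonneg _)
    intro t ht
    rw [hvar mu t ht, norm_smul]
    exact mul_le_mul_of_nonneg_left (Rop_norm hAN hBN (hYG mu hmu) ht) (norm_nonneg _)
  have : HasDerivAt (fun lam => L (Y lam)) (L (Rop (A lam) (B lam) (Y lam))) lam := by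
    rw [hasDerivAt_iff_isLittleO]
    refine Asymptotics.IsBigO.trans_isLittleO (g := fun mu => ‖mu - lam‖ ^ 2) ?_
      (Asymptotics.isLittleO_pow_sub_sub lam one_lt_two)
    apply Asymptotics.IsBigO.of_bound (C * (k * (k * G)))
    filter_upwards [Metric.closedBall_mem_nhds lam one_pos] with mu hmu
    rw [Metric.mem_closedBall, dist_eq_norm] at hmu
    simpa using main mu hmu
  exact this.differentiableAt

lemma app_good {T : ℝ} (U : NonlocalForm T) : GoodFun T U.app := by
  have i1 : ∀ y : ℝ → ℂ × ℂ, ContinuousOn y (Icc 0 T) →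
      IntegrableOn (fun t => U.w₁ t * (y t).1) (Icc 0 T) U.μ₁ := fun y hy =>
    U.int₁.integrableOn.mul_continuousOn hy.fst isCompact_Icc
  have i2 : ∀ y : ℝ → ℂ × ℂ, ContinuousOn y (Icc 0 T) →
      IntegrableOn (fun t => U.w₂ t * (y t).2) (Icc 0 T) U.μ₂ := fun y hy =>
    U.int₂.integrableOn.mul_continuousOn hy.snd isCompact_Icc
  constructor
  · intro y z hy hz c
    unfold NonlocalForm.app
    have e1 : (∫ t in Icc (0 : ℝ) T, U.w₁ t * (y t + c • z t).1 ∂U.μ₁) =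
        (∫ t in Icc (0 : ℝ) T, U.w₁ t * (y t).1 ∂U.μ₁) +
          c * ∫ t in Icc (0 : ℝ) T, U.w₁ t * (z t).1 ∂U.μ₁ := by
      rw [← integral_const_mul, ← integral_add (i1 y hy) ((i1 z hz).const_mul c)]
      congr 1
      ext t
      simp
      ring
    have e2 : (∫ t in Icc (0 : ℝ) T, U.w₂ t * (y t + c • z t).2 ∂U.μ₂) =
        (∫ t in Icc (0 : ℝ) T, U.w₂ t * (y t).2 ∂U.μ₂) +
          c * ∫ t in Icc (0 : ℝ) T, U.w₂ t * (z t).2 ∂U.μ₂ := by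
      rw [← integral_const_mul, ← integral_add (i2 y hy) ((i2 z hz).const_mul c)]
      congr 1
      ext t
      simp
      ring
    rw [e1, e2]; ring
  · refine ⟨(∫ t in Icc (0 : ℝ) T, ‖U.w₁ t‖ ∂U.μ₁) + ∫ t in Icc (0 : ℝ) T, ‖U.w₂ t‖ ∂U.μ₂,
      add_nonneg (integral_nonneg fun _ => norm_nonneg _) (integral_nonneg fun _ => norm_nonneg _),
      ?_⟩
    intro y s hy hs
    unfold NonlocalForm.app
    refine (norm_add_le _ _).trans ?_
    rw [add_mul, ← integral_mul_const, ← integral_mul_const]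
    refine add_le_add ?_ ?_
    · apply norm_integral_le_of_norm_le (U.int₁.norm.integrableOn.mul_const s)
      refine (ae_restrict_iff' measurableSet_Icc).2 (Eventually.of_forall fun t ht => ?_)
      rw [norm_mul]
      exact mul_le_mul_of_nonneg_left ((norm_fst_le _).trans (hs t ht)) (norm_nonneg _)
    · apply norm_integral_le_of_norm_le (U.int₂.norm.integrableOn.mul_const s)
      refine (ae_restrict_iff' measurableSet_Icc).2 (Eventually.of_forall fun t ht => ?_)
      rw [norm_mul]
      exact mul_le_mul_of_nonneg_left ((norm_snd_le _).trans (hs t ht)) (norm_nonneg _)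

lemma eval_good {T : ℝ} (hT : 0 < T) : GoodFun T (fun y => (y T).1) := by
  constructor
  · intro y z _ _ c
    simp
  · refine ⟨1, zero_le_one, fun y s _ hs => ?_⟩
    rw [one_mul]
    exact (norm_fst_le _).trans (hs T ⟨hT.le, le_rfl⟩)

/-- Zero-free function on a ball, small at the centre, is small nearby. -/
lemma harnack_small {f : ℂ → ℂ} (hf : Differentiable ℂ f) {c : ℂ} {δ A : ℝ} (hδ : 0 < δ)
    (hA : ∀ z ∈ Metric.ball c δ, ‖f z‖ ≤ A) (hne : ∀ z ∈ Metric.ball c δ, f z ≠ 0)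
    (hc : ‖f c‖ < A) {z : ℂ} (hz : dist z c ≤ δ / 5) :
    ‖f z‖ ≤ Real.sqrt (A * ‖f c‖) := by
  have hcc : c ∈ Metric.ball c δ := Metric.mem_ball_self hδ
  have hfc : 0 < ‖f c‖ := norm_pos_iff.2 (hne c hcc)
  have hdf : Differentiable ℂ (deriv f) := by
    have := (hf.contDiff (n := 2)).differentiable_deriv_two
    exact this
  have hd : DifferentiableOn ℂ (fun z => deriv f z / f z) (Metric.ball c δ) :=
    hdf.differentiableOn.div hf.differentiableOn hne
  obtain ⟨g, hg0, hg⟩ := hd.isExactOn_ball.with_val_at c 0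
  have hconst : ∀ w ∈ Metric.ball c δ, f w = f c * Complex.exp (g w) := by
    intro w hw
    have hD : ∀ x ∈ Metric.ball c δ, HasDerivAt (fun x => f x * Complex.exp (-g x)) 0 x := by
      intro x hx
      have h1 := (hf x).hasDerivAt.mul ((hg x hx).neg.cexp)
      refine h1.congr_deriv ?_
      have := hne x hx
      simp only [Pi.neg_apply]
      rw [show f x * (Complex.exp (-g x) * -(deriv f x / f x)) =
        -(deriv f x) * Complex.exp (-g x) * (f x / f x) by ring, div_self this]
      ring
    have := IsOpen.is_const_of_deriv_eq_zero Metric.isOpen_ball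
      (convex_ball c δ).isPreconnected (fun x hx => (hD x hx).differentiableAt.differentiableWithinAt)
      (fun x hx => (hD x hx).deriv) hw hcc
    simp only [hg0, neg_zero, Complex.exp_zero, mul_one, Complex.exp_neg] at this
    rw [← this]
    field_simp [Complex.exp_ne_zero]
  set M := Real.log A - Real.log ‖f c‖ with hM
  have hApos : 0 < A := hfc.trans hc
  have hMpos : 0 < M := sub_pos.2 (Real.log_lt_log hfc hc)
  have hlog : ∀ w ∈ Metric.ball c δ, Real.log ‖f w‖ = Real.log ‖f c‖ + (g w).re := by
    intro w hw
    rw [hconst w hw, norm_mul, Complex.norm_exp, Real.log_mul hfc.ne' (Real.exp_pos _).ne',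
      Real.log_exp]
  have key := Complex.borelCaratheodory_zero (f := fun w => g (c + w)) (M := M) (R := δ)
    (z := z - c) hMpos ?_ ?_ hδ ?_ (by simpa using hg0)
  · have hzb : z ∈ Metric.ball c δ := by
      rw [Metric.mem_ball]; linarith
    simp only [add_sub_cancel] at key
    rw [dist_eq_norm] at hz
    have h2 : 2 * M * ‖z - c‖ / (δ - ‖z - c‖) ≤ M / 2 := by
      rw [div_le_div_iff₀ (by linarith) (by norm_num)]
      nlinarith
    have h3 : (g z).re ≤ M / 2 := ((Complex.re_le_norm _).trans key).trans h2
    have h4 := hlog z hzb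
    have hfz : 0 < ‖f z‖ := norm_pos_iff.2 (hne z hzb)
    rw [Real.le_sqrt hfz.le (by positivity), ← Real.log_le_log_iff (by positivity) (by positivity),
      Real.log_pow, Real.log_mul hApos.ne' hfc.ne']
    push_cast
    linarith
  · intro w hw
    have hw' : c + w ∈ Metric.ball c δ := by simpa [Metric.mem_ball, dist_eq_norm] using hw
    exact ((hg _ hw').comp_const_add c w).differentiableAt.differentiableWithinAt
  · intro w hw
    have hw' : c + w ∈ Metric.ball c δ := by simpa [Metric.mem_ball, dist_eq_norm] using hw
    have h4 := hlog _ hw'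
    have h5 := Real.log_le_log (norm_pos_iff.2 (hne _ hw')) (hA _ hw')
    show (g (c + w)).re ≤ M
    linarith
  · rw [mem_ball_zero_iff, ← dist_eq_norm]; linarith

/-- Three circles. -/
lemma three_circles {f : ℂ → ℂ} (hf : Differentiable ℂ f) {c : ℂ} {r R a b : ℝ} (hr : 0 < r)
    (hrR : r < R) (ha : ∀ z, dist z c = r → ‖f z‖ ≤ a) (hb : ∀ z, dist z c ≤ R → ‖f z‖ ≤ b)
    {z : ℂ} (hz : r ≤ dist z c) (hz' : dist z c ≤ R) :
    ‖f z‖ ≤ a ^ (1 - (Real.log (dist z c) - Real.log r) / (Real.log R - Real.log r)) *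
      b ^ ((Real.log (dist z c) - Real.log r) / (Real.log R - Real.log r)) := by
  have hR : 0 < R := hr.trans hrR
  have hdist : ∀ w : ℂ, dist (c + Complex.exp w) c = Real.exp w.re := by
    intro w; simp [dist_eq_norm, Complex.norm_exp]
  have hzc : 0 < dist z c := hr.trans_le hz
  have hzc' : z - c ≠ 0 := by
    rw [dist_eq_norm] at hzc; exact norm_pos_iff.1 hzc
  have hre : (Complex.log (z - c)).re = Real.log (dist z c) := by
    rw [Complex.log_re, dist_eq_norm]
  have := Complex.HadamardThreeLines.norm_le_interp_of_mem_verticalClosedStrip'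
    (f := fun w => f (c + Complex.exp w)) (z := Complex.log (z - c)) (a := a) (b := b)
    (Real.log_lt_log hr hrR) ?_ ?_ ?_ ?_ ?_
  · simpa only [hre, Complex.exp_log hzc', add_sub_cancel] using this
  · simp only [Complex.HadamardThreeLines.verticalClosedStrip, mem_preimage, hre]
    exact ⟨Real.log_le_log hr hz, Real.log_le_log hzc hz'⟩
  · apply Differentiable.diffContOnCl
    fun_prop
  · refine ⟨b, ?_⟩
    rintro _ ⟨w, hw, rfl⟩
    apply hb
    rw [hdist]
    have : w.re ≤ Real.log R := hw.2
    exact (Real.exp_le_exp.2 this).trans_eq (Real.exp_log hR)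
  · intro w hw
    apply ha
    rw [hdist, show w.re = Real.log r from hw, Real.exp_log hr]
  · intro w hw
    apply hb
    rw [hdist, show w.re = Real.log R from hw, Real.exp_log hR]

lemma strip_lower {f : ℂ → ℂ} (hf : Differentiable ℂ f) {K c : ℝ} (hK : 0 ≤ K) (hc : 0 < c)
    (hbd : ∀ S : ℝ, ∃ A : ℝ, ∀ z : ℂ, |z.im| ≤ S → ‖f z‖ ≤ A)
    (hlow : ∀ z : ℂ, K ≤ z.im → c ≤ ‖f z‖) {δ : ℝ} (hδ : 0 < δ) :
    ∃ m > 0, ∀ lam : ℂ, 0 ≤ lam.im → lam.im ≤ K → (∀ z, f z = 0 → δ ≤ dist lam z) →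
      m ≤ ‖f lam‖ := by
  set ρ := K + δ with hρ
  obtain ⟨A₀, hA₀⟩ := hbd (K + 2 * ρ)
  set A := |A₀| + 1 with hA
  have hApos : 0 < A := by positivity
  have hAb : ∀ z : ℂ, |z.im| ≤ K + 2 * ρ → ‖f z‖ < A := fun z hz =>
    (hA₀ z hz).trans_lt (by have := le_abs_self A₀; linarith)
  have hρpos : 0 < ρ := by positivity
  set θ := (Real.log ρ - Real.log (δ / 5)) / (Real.log (2 * ρ) - Real.log (δ / 5)) with hθ
  have hl1 : Real.log (δ / 5) < Real.log ρ := Real.log_lt_log (by positivity) (by linarith)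
  have hl2 : Real.log ρ < Real.log (2 * ρ) := Real.log_lt_log (by positivity) (by linarith)
  have hθ1 : 0 < 1 - θ := by
    rw [hθ, sub_pos, div_lt_one (by linarith)]; linarith
  set d := (c / A ^ θ) ^ (1 / (1 - θ)) with hd
  have hdpos : 0 < d := by positivity
  refine ⟨d ^ 2 / A, by positivity, fun lam h0 h1 hz => ?_⟩
  have hball : ∀ z, dist z lam ≤ 2 * ρ → |z.im| ≤ K + 2 * ρ := by
    intro z hz
    have h2 : |z.im - lam.im| ≤ 2 * ρ := by
      rw [dist_eq_norm] at hz
      exact (Complex.abs_im_le_norm (z - lam)).trans hz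
    rw [abs_le] at h2 ⊢
    constructor <;> linarith [h2.1, h2.2]
  have hc1 : ∀ z, dist z lam ≤ δ / 5 → ‖f z‖ ≤ Real.sqrt (A * ‖f lam‖) := fun z hz5 =>
    harnack_small hf (c := lam) (A := A) hδ
    (fun z hz => (hAb z (hball z (by rw [Metric.mem_ball] at hz; linarith))).le)
    (fun z hzb h0 => by
      have := hz z h0
      rw [Metric.mem_ball, dist_comm] at hzb
      linarith)
    (hAb lam (hball lam (by rw [dist_self]; positivity))) hz5
  have hdz : dist (lam + ρ * Complex.I) lam = ρ := by
    simp [dist_eq_norm, abs_of_pos hρpos]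
  have h3 := three_circles hf (c := lam) (r := δ / 5) (R := 2 * ρ)
    (a := Real.sqrt (A * ‖f lam‖)) (b := A) (by positivity) (by linarith)
    (fun z hz => hc1 z hz.le) (fun z hz => (hAb z (hball z hz)).le) (z := lam + ρ * Complex.I)
    (by rw [hdz]; linarith) (by rw [hdz]; linarith)
  rw [hdz, ← hθ] at h3
  have h4 : c ≤ ‖f (lam + ρ * Complex.I)‖ := hlow _ (by simp; linarith)
  have h5 : c / A ^ θ ≤ Real.sqrt (A * ‖f lam‖) ^ (1 - θ) := by
    rw [div_le_iff₀ (by positivity)]; exact h4.trans h3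
  have h6 : d ≤ Real.sqrt (A * ‖f lam‖) := by
    have := Real.rpow_le_rpow (by positivity) h5 (z := 1 / (1 - θ)) (by positivity)
    rwa [← Real.rpow_mul (Real.sqrt_nonneg _), mul_one_div_cancel hθ1.ne', Real.rpow_one] at this
  rw [Real.le_sqrt hdpos.le (by positivity)] at h6
  rw [div_le_iff₀ hApos]
  linarith

lemma norm_exp_I_mul_real (lam : ℂ) (s : ℝ) :
    ‖Complex.exp (Complex.I * lam * (s : ℂ))‖ = Real.exp (-lam.im * s) := by
  rw [Complex.norm_exp]
  congr 1
  simp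

lemma norm_pq {p q : ℂ} {M : ℝ} (h : ‖p‖ + ‖q‖ ≤ M) :
    ‖q + Complex.I * p‖ ≤ M ∧ ‖q - Complex.I * p‖ ≤ M := by
  have h1 : ‖Complex.I * p‖ = ‖p‖ := by simp
  constructor
  · have := norm_add_le q (Complex.I * p); linarith
  · have := norm_sub_le q (Complex.I * p); linarith

lemma DSol.asym {p q : ℝ → ℂ} {T M : ℝ} (hT : 0 < T) (hM0 : 0 ≤ M)
    (hM : ∀ x ∈ Icc (0 : ℝ) T, ‖p x‖ + ‖q x‖ ≤ M) {lam : ℂ} (hl : 0 < lam.im)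
    {Z : ℝ → ℂ × ℂ} (hZ : DSol p q T lam Z) (hZT : Z T = (0, 1)) :
    ‖((Z 0).1 - Complex.I * (Z 0).2) * Complex.exp (Complex.I * lam * (T : ℝ))‖ ≤
      Real.exp (-(2 * lam.im) * T) + M * (2 * Real.exp (M * T)) / (2 * lam.im) ∧
    ‖((Z 0).1 + Complex.I * (Z 0).2) * Complex.exp (Complex.I * lam * (T : ℝ)) - Complex.I‖ ≤
      M / (2 * lam.im) + M * (M * (2 * Real.exp (M * T)) / (2 * lam.im)) * T := by
  set G := 2 * Real.exp (M * T) with hG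
  have hG0 : 0 < G := by positivity
  set η := lam.im with hη
  set E : ℝ → ℂ := fun t => Complex.exp (Complex.I * lam * ((T - t : ℝ) : ℂ)) with hE
  have hEn : ∀ t, ‖E t‖ = Real.exp (-η * (T - t)) := fun t => norm_exp_I_mul_real lam _
  have hEd : ∀ t : ℝ, HasDerivAt E (-(Complex.I * lam) * E t) t := by
    intro t
    have h1 : HasDerivAt (fun t : ℝ => ((T - t : ℝ) : ℂ)) (-1) t := by
      have := ((hasDerivAt_id t).const_sub T).ofReal_comp
      simpa using this
    have h2 := (h1.const_mul (Complex.I * lam)).cexp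
    refine h2.congr_deriv ?_
    simp only [hE]; ring
  set u : ℝ → ℂ := fun t => ((Z t).1 - Complex.I * (Z t).2) * E t with hu
  set v : ℝ → ℂ := fun t => ((Z t).1 + Complex.I * (Z t).2) * E t with hv
  have hI := Complex.I_mul_I
  have hud : ∀ t ∈ Icc (0 : ℝ) T, HasDerivAt u
      (-(2 * (Complex.I * lam)) * u t + (q t + Complex.I * p t) * v t) t := by
    intro t ht
    have := ((hZ t ht).1.sub ((hZ t ht).2.const_mul Complex.I)).mul (hEd t)
    refine this.congr_deriv ?_
    simp only [hu, hv, Pi.sub_apply]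
    linear_combination (-(p t * (Z t).2 * E t) + lam * (Z t).2 * E t - 2 * lam * (Z t).2 * E t) * hI
  have hvd : ∀ t ∈ Icc (0 : ℝ) T, HasDerivAt v ((q t - Complex.I * p t) * u t) t := by
    intro t ht
    have := ((hZ t ht).1.add ((hZ t ht).2.const_mul Complex.I)).mul (hEd t)
    refine this.congr_deriv ?_
    simp only [hu, hv, Pi.add_apply]
    linear_combination (-(p t * (Z t).2 * E t) - lam * (Z t).2 * E t) * hI
  have hTm : T ∈ Icc 0 T := ⟨hT.le, le_rfl⟩
  have hZn : ∀ t ∈ Icc (0 : ℝ) T, ‖Z t‖ * ‖E t‖ ≤ Real.exp (M * T) := by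
    intro t ht
    have h1 := hZ.norm_le hM ht hTm zero_le_one (by simp [hZT])
    rw [one_mul, abs_of_pos hl, abs_of_nonpos (by linarith [ht.2])] at h1
    calc ‖Z t‖ * ‖E t‖ ≤ Real.exp ((η + M) * -(t - T)) * Real.exp (-η * (T - t)) := by
          rw [hEn]; gcongr
      _ = Real.exp (M * (T - t)) := by rw [← Real.exp_add]; congr 1; ring
      _ ≤ _ := by
          apply Real.exp_le_exp.2
          have := ht.1
          nlinarith
  have hvn : ∀ t ∈ Icc (0 : ℝ) T, ‖v t‖ ≤ G := by
    intro t ht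
    have h0 := hZn t ht
    have h1 : ‖(Z t).1 + Complex.I * (Z t).2‖ ≤ 2 * ‖Z t‖ := by
      refine (norm_add_le _ _).trans ?_
      rw [norm_mul, Complex.norm_I, one_mul]
      linarith [norm_fst_le (Z t), norm_snd_le (Z t)]
    simp only [hv, norm_mul]
    calc _ ≤ 2 * ‖Z t‖ * ‖E t‖ := by gcongr
      _ ≤ G := by rw [hG]; linarith
  have huT : ‖u T‖ = 1 := by simp [hu, hE, hZT]
  have hvT : v T = Complex.I := by simp [hv, hE, hZT]
  have key : ∀ x ∈ Icc (0 : ℝ) T, ‖u x‖ ≤ Real.exp (-(2 * η) * (T - x)) + M * G / (2 * η) := by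
    intro x hx
    set F : ℝ → ℂ := fun t => Complex.exp (Complex.I * (2 * lam) * ((t - x : ℝ) : ℂ)) with hF
    have hFn : ∀ t, ‖F t‖ = Real.exp (-(2 * η) * (t - x)) := fun t => by
      have := norm_exp_I_mul_real (2 * lam) (t - x)
      simp only [hF, this, Complex.mul_im, Complex.re_ofNat, Complex.im_ofNat, zero_mul, add_zero, hη]
    have hFd : ∀ t : ℝ, HasDerivAt F (2 * (Complex.I * lam) * F t) t := by
      intro t
      have h1 : HasDerivAt (fun t : ℝ => ((t - x : ℝ) : ℂ)) 1 t := by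
        have := ((hasDerivAt_id t).sub_const x).ofReal_comp
        simpa using this
      have h2 := (h1.const_mul (Complex.I * (2 * lam))).cexp
      refine h2.congr_deriv ?_
      simp only [hF]; ring
    have hwd : ∀ t ∈ Icc x T, HasDerivAt (fun t => u t * F t - u x)
        ((q t + Complex.I * p t) * v t * F t) t := by
      intro t ht
      refine (((hud t ⟨hx.1.trans ht.1, ht.2⟩).mul (hFd t)).sub_const (u x)).congr_deriv ?_
      ring
    have hBd : ∀ t, HasDerivAt (fun t => M * G / (2 * η) * (1 - Real.exp (-(2 * η) * (t - x))))
        (M * G * Real.exp (-(2 * η) * (t - x))) t := by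
      intro t
      have := (((((hasDerivAt_id t).sub_const x).const_mul (-(2 * η))).exp).const_sub 1).const_mul
        (M * G / (2 * η))
      refine this.congr_deriv ?_
      simp only [id]
      field_simp
    have := image_norm_le_of_norm_deriv_right_le_deriv_boundary
      (f := fun t => u t * F t - u x) (a := x) (b := T)
      (fun t ht => (hwd t ht).continuousAt.continuousWithinAt)
      (fun t ht => (hwd t ⟨ht.1, ht.2.le⟩).hasDerivWithinAt)
      (by simp [hF]) hBd (by
        intro t ht
        have ht' : t ∈ Icc 0 T := ⟨hx.1.trans ht.1, ht.2.le⟩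
        rw [norm_mul, norm_mul, hFn]
        have := (norm_pq (hM t ht')).1
        have := hvn t ht'
        gcongr) (show T ∈ Icc x T from ⟨hx.2, le_rfl⟩)
    have h2 : ‖u x‖ ≤ ‖u T * F T‖ + ‖u T * F T - u x‖ := by
      have := norm_sub_le (u T * F T) (u T * F T - u x)
      rwa [sub_sub_cancel] at this
    rw [norm_mul (u T), huT, one_mul, hFn] at h2
    have h3 : M * G / (2 * η) * (1 - Real.exp (-(2 * η) * (T - x))) ≤ M * G / (2 * η) := by
      apply mul_le_of_le_one_right (by positivity)
      linarith [Real.exp_pos (-(2 * η) * (T - x))]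
    linarith
  have h0m : (0 : ℝ) ∈ Icc 0 T := ⟨le_rfl, hT.le⟩
  have hE0 : E 0 = Complex.exp (Complex.I * lam * (T : ℝ)) := by simp [hE]
  rw [← hE0]
  refine ⟨by simpa only [sub_zero] using key 0 h0m, ?_⟩
  have hBd : ∀ t, HasDerivAt (fun t => M / (2 * η) * (Real.exp (-(2 * η) * (T - t)) -
      Real.exp (-(2 * η) * T)) + M * (M * G / (2 * η)) * t)
      (M * (Real.exp (-(2 * η) * (T - t)) + M * G / (2 * η))) t := by
    intro t
    have := (((((hasDerivAt_id t).const_sub T).const_mul (-(2 * η))).exp.sub_const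
      (Real.exp (-(2 * η) * T))).const_mul (M / (2 * η))).add
      ((hasDerivAt_id t).const_mul (M * (M * G / (2 * η))))
    refine this.congr_deriv ?_
    simp only [id]
    field_simp
  have := image_norm_le_of_norm_deriv_right_le_deriv_boundary
      (f := fun t => v t - v 0) (a := 0) (b := T)
      (fun t ht => ((hvd t ht).sub_const (v 0)).continuousAt.continuousWithinAt)
      (fun t ht => ((hvd t ⟨ht.1, ht.2.le⟩).sub_const (v 0)).hasDerivWithinAt)
      (by simp) hBd (by
        intro t ht
        have ht' : t ∈ Icc 0 T := ⟨ht.1, ht.2.le⟩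
        rw [norm_mul]
        have := (norm_pq (hM t ht')).2
        have := key t ht'
        gcongr) hTm
  rw [hvT, norm_sub_rev] at this
  refine this.trans ?_
  simp only [sub_self, mul_zero, Real.exp_zero]
  have h3 : M / (2 * η) * (1 - Real.exp (-(2 * η) * T)) ≤ M / (2 * η) := by
    apply mul_le_of_le_one_right (by positivity)
    linarith [Real.exp_pos (-(2 * η) * T)]
  linarith

lemma tail_tendsto {T : ℝ} {μ : Measure ℝ} {w : ℝ → ℂ} (hw : Integrable w μ) :
    Tendsto (fun η : ℝ => ∫ x in Ioc 0 T, ‖w x‖ * Real.exp (-η * x) ∂μ) atTop (nhds 0) := by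
  suffices h : Tendsto (fun η : ℝ => ∫ x in Ioc 0 T, ‖w x‖ * Real.exp (-η * x) ∂μ) atTop
      (nhds (∫ x in Ioc 0 T, (0 : ℝ) ∂μ)) by simpa only [integral_zero] using h
  refine tendsto_integral_filter_of_dominated_convergence (fun x => ‖w x‖) ?_ ?_
    hw.norm.integrableOn ?_
  · refine Eventually.of_forall fun η => ?_
    exact (hw.norm.aestronglyMeasurable.mul
      (by fun_prop : Continuous fun x : ℝ => Real.exp (-η * x)).aestronglyMeasurable).restrict
  · filter_upwards [eventually_ge_atTop 0] with η hη
    filter_upwards [ae_restrict_mem measurableSet_Ioc] with x hx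
    rw [norm_mul, norm_norm, Real.norm_eq_abs, Real.abs_exp]
    apply mul_le_of_le_one_right (norm_nonneg _)
    rw [Real.exp_le_one_iff]
    nlinarith [hx.1]
  · filter_upwards [ae_restrict_mem measurableSet_Ioc] with x hx
    rw [show (0 : ℝ) = ‖w x‖ * 0 by simp]
    refine Tendsto.const_mul _ (Real.tendsto_exp_atBot.comp ?_)
    have := (tendsto_id.atTop_mul_const hx.1 : Tendsto (fun η : ℝ => η * x) atTop atTop)
    simpa [Function.comp_def] using tendsto_neg_atTop_atBot.comp this

lemma tail_bound {T : ℝ} (hT : 0 < T) {μ : Measure ℝ} {w : ℝ → ℂ} (hw : Integrable w μ)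
    {f : ℝ → ℂ} (hf : ContinuousOn f (Icc 0 T)) {R η : ℝ}
    (hη : 0 ≤ η) (hb : ∀ x ∈ Icc (0 : ℝ) T, ‖f x‖ ≤ R * Real.exp (-η * x)) :
    ‖(∫ t in Icc (0 : ℝ) T, w t * f t ∂μ) - w 0 * ((μ {0}).toReal : ℂ) * f 0‖ ≤
      R * ∫ x in Ioc 0 T, ‖w x‖ * Real.exp (-η * x) ∂μ := by
  have hi : IntegrableOn (fun t => w t * f t) (Icc 0 T) μ :=
    hw.integrableOn.mul_continuousOn hf isCompact_Icc
  have hsp : Icc (0 : ℝ) T = {0} ∪ Ioc 0 T := by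
    rw [singleton_union, Ioc_insert_left hT.le]
  have h1 : (∫ t in Icc (0 : ℝ) T, w t * f t ∂μ) =
      (∫ t in ({0} : Set ℝ), w t * f t ∂μ) + ∫ t in Ioc 0 T, w t * f t ∂μ := by
    rw [hsp] at hi ⊢
    exact setIntegral_union (by simp) measurableSet_Ioc (hi.mono_set subset_union_left)
      (hi.mono_set subset_union_right)
  have h2 : (∫ t in ({0} : Set ℝ), w t * f t ∂μ) = w 0 * ((μ {0}).toReal : ℂ) * f 0 := by
    rw [integral_singleton, Measure.real, Complex.real_smul]; ring
  rw [h1, h2, add_sub_cancel_left, ← integral_const_mul]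
  refine norm_integral_le_of_norm_le ?_ ?_
  · refine Integrable.const_mul ?_ R
    exact hw.norm.integrableOn.mul_continuousOn_of_subset
      (by fun_prop : ContinuousOn (fun x : ℝ => Real.exp (-η * x)) (Icc 0 T)) measurableSet_Ioc
      isCompact_Icc Ioc_subset_Icc_self
  · filter_upwards [ae_restrict_mem measurableSet_Ioc] with x hx
    rw [norm_mul]
    have := mul_le_mul_of_nonneg_left (hb x (Ioc_subset_Icc_self hx)) (norm_nonneg (w x))
    linarith

lemma app_lower {p q : ℝ → ℂ} {T M : ℝ} (hT : 0 < T) (hM0 : 0 ≤ M)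
    (hM : ∀ x ∈ Icc (0 : ℝ) T, ‖p x‖ + ‖q x‖ ≤ M) (U : NonlocalForm T)
    (hh : U.h₁ - Complex.I * U.h₂ ≠ 0) :
    ∃ K c : ℝ, 0 < K ∧ 0 < c ∧ ∀ lam : ℂ, K ≤ lam.im → ∀ Z, DSol p q T lam Z → Z T = (0, 1) →
      c * Real.exp (lam.im * T) ≤ ‖U.app Z‖ := by
  set h := U.h₁ - Complex.I * U.h₂ with hh'
  set k := U.h₁ + Complex.I * U.h₂ with hk'
  set G := 2 * Real.exp (M * T) with hG
  set a : ℝ → ℝ := fun η => Real.exp (-(2 * η) * T) + M * G / (2 * η) with ha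
  set b : ℝ → ℝ := fun η => M / (2 * η) + M * (M * G / (2 * η)) * T with hb
  set t1 : ℝ → ℝ := fun η => ∫ x in Ioc 0 T, ‖U.w₁ x‖ * Real.exp (-η * x) ∂U.μ₁ with ht1
  set t2 : ℝ → ℝ := fun η => ∫ x in Ioc 0 T, ‖U.w₂ x‖ * Real.exp (-η * x) ∂U.μ₂ with ht2
  have l2 : Tendsto (fun η : ℝ => 2 * η) atTop atTop := tendsto_id.const_mul_atTop two_pos
  have la : Tendsto a atTop (nhds 0) := by
    rw [show (0 : ℝ) = 0 + 0 by simp]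
    refine Tendsto.add (Real.tendsto_exp_atBot.comp ?_) (tendsto_const_nhds.div_atTop l2)
    have := tendsto_neg_atTop_atBot.comp (l2.atTop_mul_const hT)
    simpa [Function.comp_def] using this
  have lb : Tendsto b atTop (nhds 0) := by
    rw [show (0 : ℝ) = 0 + M * 0 * T by simp]
    exact (tendsto_const_nhds.div_atTop l2).add
      (((tendsto_const_nhds.div_atTop l2).const_mul M).mul_const T)
  have l1 : Tendsto t1 atTop (nhds 0) := tail_tendsto U.int₁
  have l2 : Tendsto t2 atTop (nhds 0) := tail_tendsto U.int₂
  have lerr : Tendsto (fun η => ‖h‖ / 2 * b η + ‖k‖ / 2 * a η + Real.exp (M * T) * (t1 η + t2 η))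
      atTop (nhds 0) := by
    rw [show (0 : ℝ) = ‖h‖ / 2 * 0 + ‖k‖ / 2 * 0 + Real.exp (M * T) * (0 + 0) by simp]
    exact ((lb.const_mul _).add (la.const_mul _)).add ((l1.add l2).const_mul _)
  have hpos : 0 < ‖h‖ / 4 := by have := norm_pos_iff.2 hh; positivity
  obtain ⟨K, hK⟩ := eventually_atTop.1 (lerr.eventually (gt_mem_nhds hpos))
  refine ⟨max K 1, ‖h‖ / 4, by positivity, hpos, ?_⟩
  intro lam hlam Z hZ hZT
  set η := lam.im with hη
  have hl : 0 < η := lt_of_lt_of_le one_pos ((le_max_right _ _).trans hlam)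
  have herr := hK η ((le_max_left _ _).trans hlam)
  obtain ⟨hu, hv⟩ := hZ.asym hT hM0 hM hl hZT
  set e := Complex.exp (Complex.I * lam * (T : ℝ)) with he
  have hen : ‖e‖ = Real.exp (-η * T) := norm_exp_I_mul_real lam T
  have hTm : T ∈ Icc 0 T := ⟨hT.le, le_rfl⟩
  have hZb : ∀ x ∈ Icc (0 : ℝ) T, ‖Z x‖ ≤
      Real.exp (M * T) * Real.exp (η * T) * Real.exp (-η * x) := by
    intro t ht
    have h1 := hZ.norm_le hM ht hTm zero_le_one (by simp [hZT])
    rw [one_mul, abs_of_pos hl, abs_of_nonpos (by linarith [ht.2])] at h1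
    refine h1.trans ?_
    rw [← Real.exp_add, ← Real.exp_add]
    apply Real.exp_le_exp.2
    have := ht.1
    nlinarith
  have r1 := tail_bound hT U.int₁ hZ.cont1 hl.le (fun x hx => (norm_fst_le _).trans (hZb x hx))
  have r2 := tail_bound hT U.int₂ hZ.cont2 hl.le (fun x hx => (norm_snd_le _).trans (hZb x hx))
  set I1 := ∫ t in Icc (0 : ℝ) T, U.w₁ t * (Z t).1 ∂U.μ₁
  set I2 := ∫ t in Icc (0 : ℝ) T, U.w₂ t * (Z t).2 ∂U.μ₂
  change ‖I1 - U.h₁ * (Z 0).1‖ ≤ _ * t1 η at r1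
  change ‖I2 - U.h₂ * (Z 0).2‖ ≤ _ * t2 η at r2
  have happ : U.app Z = I1 + I2 := rfl
  set uu := ((Z 0).1 - Complex.I * (Z 0).2) * e with huu
  set vv := ((Z 0).1 + Complex.I * (Z 0).2) * e with hvv
  have hid : h * Complex.I / 2 = U.app Z * e - h / 2 * (vv - Complex.I) - k / 2 * uu
      - (I1 - U.h₁ * (Z 0).1) * e - (I2 - U.h₂ * (Z 0).2) * e := by
    rw [happ, huu, hvv, hh', hk']
    linear_combination (-(U.h₂ * (Z 0).2 * e)) * Complex.I_mul_I
  have hn : ‖h * Complex.I / 2‖ = ‖h‖ / 2 := by simp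
  have hEE : Real.exp (η * T) * Real.exp (-η * T) = 1 := by
    rw [← Real.exp_add]; simp
  have b1 : ‖(I1 - U.h₁ * (Z 0).1) * e‖ ≤ Real.exp (M * T) * t1 η := by
    rw [norm_mul, hen]
    calc _ ≤ Real.exp (M * T) * Real.exp (η * T) * t1 η * Real.exp (-η * T) := by gcongr
      _ = Real.exp (M * T) * t1 η * (Real.exp (η * T) * Real.exp (-η * T)) := by ring
      _ = _ := by rw [hEE, mul_one]
  have b2 : ‖(I2 - U.h₂ * (Z 0).2) * e‖ ≤ Real.exp (M * T) * t2 η := by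
    rw [norm_mul, hen]
    calc _ ≤ Real.exp (M * T) * Real.exp (η * T) * t2 η * Real.exp (-η * T) := by gcongr
      _ = Real.exp (M * T) * t2 η * (Real.exp (η * T) * Real.exp (-η * T)) := by ring
      _ = _ := by rw [hEE, mul_one]
  have b3 : ‖h / 2 * (vv - Complex.I)‖ ≤ ‖h‖ / 2 * b η := by
    rw [norm_mul, norm_div, Complex.norm_ofNat]
    exact mul_le_mul_of_nonneg_left hv (by positivity)
  have b4 : ‖k / 2 * uu‖ ≤ ‖k‖ / 2 * a η := by
    rw [norm_mul, norm_div, Complex.norm_ofNat]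
    exact mul_le_mul_of_nonneg_left hu (by positivity)
  have tri : ‖h‖ / 2 ≤ ‖U.app Z * e‖ + ‖h / 2 * (vv - Complex.I)‖ + ‖k / 2 * uu‖ +
      ‖(I1 - U.h₁ * (Z 0).1) * e‖ + ‖(I2 - U.h₂ * (Z 0).2) * e‖ := by
    rw [← hn, hid]
    refine (norm_sub_le _ _).trans (add_le_add_left ?_ _)
    refine (norm_sub_le _ _).trans (add_le_add_left ?_ _)
    refine (norm_sub_le _ _).trans (add_le_add_left ?_ _)
    exact norm_sub_le _ _
  have fin : ‖h‖ / 4 ≤ ‖U.app Z‖ * Real.exp (-η * T) := by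
    rw [← hen, ← norm_mul]
    linarith
  calc ‖h‖ / 4 * Real.exp (η * T) ≤ ‖U.app Z‖ * Real.exp (-η * T) * Real.exp (η * T) := by gcongr
    _ = ‖U.app Z‖ * (Real.exp (η * T) * Real.exp (-η * T)) := by ring
    _ = _ := by rw [hEE, mul_one]

/-- **Equations (26)–(27)** (growth estimates in the upper half-plane):
(i) `‖Z₁(x,λ)‖ ≤ C e^{Im λ (T−x)}` for `Im λ ≥ 0`;
(ii) for every `δ > 0`, if `Im λ ≥ 0` and `λ` has distance `≥ δ` from every zero of `Δ₁`,
then `Δ₁(λ) ≠ 0` and `‖Φ(x,λ)‖ ≤ C_δ e^{−Im λ · x}` on `[0,T]`. -/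
theorem statement17
    (T : ℝ) (hT : 0 < T)
    (p q : ℝ → ℂ) (hp : AbsContOn p T) (hq : AbsContOn q T)
    (U₁ : NonlocalForm T)
    (hh : U₁.h₁ - Complex.I * U₁.h₂ ≠ 0)
    (X₁ X₂ Z₁ : ℂ → ℝ → ℂ × ℂ)
    (hX₁ : ∀ lam, IsDiracSol p q T lam (X₁ lam) ∧ X₁ lam 0 = (1, 0))
    (hX₂ : ∀ lam, IsDiracSol p q T lam (X₂ lam) ∧ X₂ lam 0 = (0, 1))
    (hZ₁ : ∀ lam, IsDiracSol p q T lam (Z₁ lam) ∧ Z₁ lam T = (1, 0))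
    (Δ₁ : ℂ → ℂ)
    (hΔ₁ : ∀ lam, Δ₁ lam =
      U₁.app (X₁ lam) * (X₂ lam T).1 - U₁.app (X₂ lam) * (X₁ lam T).1)
    (hΔ₁ne : ∃ lam, Δ₁ lam ≠ 0) :
    (∃ C > (0 : ℝ), ∀ lam : ℂ, 0 ≤ lam.im → ∀ x ∈ Icc (0 : ℝ) T,
      ‖Z₁ lam x‖ ≤ C * Real.exp (lam.im * (T - x))) ∧
    (∀ δ > (0 : ℝ), ∃ C > (0 : ℝ), ∀ lam : ℂ, 0 ≤ lam.im →
      (∀ z : ℂ, Δ₁ z = 0 → δ ≤ dist lam z) →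
      Δ₁ lam ≠ 0 ∧
        ∀ Φ : ℝ → ℂ × ℂ, IsDiracSol p q T lam Φ → U₁.app Φ = 1 → (Φ T).1 = 0 →
          ∀ x ∈ Icc (0 : ℝ) T, ‖Φ x‖ ≤ C * Real.exp (-lam.im * x)) := by
  have hpc := hp.continuousOn hT
  have hqc := hq.continuousOn hT
  obtain ⟨M, hM⟩ : ∃ M, ∀ x ∈ Icc (0 : ℝ) T, ‖p x‖ + ‖q x‖ ≤ M := by
    obtain ⟨M, hM⟩ := isCompact_Icc.exists_bound_of_continuousOn (hpc.norm.add hqc.norm)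
    exact ⟨M, fun x hx => (le_abs_self _).trans (hM x hx)⟩
  have h0m : (0 : ℝ) ∈ Icc 0 T := ⟨le_rfl, hT.le⟩
  have hTm : T ∈ Icc 0 T := ⟨hT.le, le_rfl⟩
  have hM0 : 0 ≤ M := le_trans (by positivity) (hM 0 h0m)
  -- bounds for solutions with normalized data at `T`
  have hbT : ∀ lam : ℂ, 0 ≤ lam.im → ∀ y, DSol p q T lam y →
      ‖(y T).1‖ ^ 2 + ‖(y T).2‖ ^ 2 ≤ 1 ^ 2 → ∀ x ∈ Icc (0 : ℝ) T,
      ‖y x‖ ≤ Real.exp (M * T) * Real.exp (lam.im * (T - x)) := by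
    intro lam hl y hy hyT x hx
    have h1 := hy.norm_le hM hx hTm zero_le_one hyT
    rw [one_mul, abs_of_nonneg hl, abs_of_nonpos (by linarith [hx.2])] at h1
    refine h1.trans ?_
    rw [← Real.exp_add]
    apply Real.exp_le_exp.2
    have := hx.1
    nlinarith
  refine ⟨⟨Real.exp (M * T), Real.exp_pos _, ?_⟩, ?_⟩
  · intro lam hl x hx
    obtain ⟨z, hz, hzz⟩ := exists_DSol hT hpc hqc (hZ₁ lam).1
    rw [hzz x hx]
    refine hbT lam hl z hz ?_ x hx
    rw [← hzz T hTm, (hZ₁ lam).2]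
    simp
  have hUg := app_good U₁
  have hVg := eval_good hT
  choose A hA hAX using fun lam => exists_DSol hT hpc hqc (hX₁ lam).1
  choose B hB hBX using fun lam => exists_DSol hT hpc hqc (hX₂ lam).1
  have hA0 : ∀ lam, A lam 0 = (1, 0) := fun lam => by rw [← hAX lam 0 h0m, (hX₁ lam).2]
  have hB0 : ∀ lam, B lam 0 = (0, 1) := fun lam => by rw [← hBX lam 0 h0m, (hX₂ lam).2]
  have hΔ : ∀ lam, Δ₁ lam =
      U₁.app (A lam) * (B lam T).1 - U₁.app (B lam) * (A lam T).1 := by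
    intro lam
    rw [hΔ₁, hUg.congr (hX₁ lam).1.1 (hAX lam), hUg.congr (hX₂ lam).1.1 (hBX lam),
      hAX lam T hTm, hBX lam T hTm]
  have hΔd : Differentiable ℂ Δ₁ := by
    rw [funext hΔ]
    exact ((hUg.differentiable hT hM0 hM hA hA0 hA hA0 hB hB0).mul
      (hVg.differentiable hT hM0 hM hB hB0 hA hA0 hB hB0)).sub
      ((hUg.differentiable hT hM0 hM hB hB0 hA hA0 hB hB0).mul
      (hVg.differentiable hT hM0 hM hA hA0 hA hA0 hB hB0))
  set Z : ℂ → ℝ → ℂ × ℂ := fun lam x =>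
    (-(B lam T).1) • A lam x + (A lam T).1 • B lam x with hZdef
  have hZ : ∀ lam, DSol p q T lam (Z lam) := fun lam => (hA lam).comb (hB lam) _ _
  have hZT : ∀ lam, Z lam T = (0, 1) := by
    intro lam
    have hw := (hA lam).wronsk (hB lam) hTm
    simp only [hA0, hB0, sub_self, zero_mul, mul_zero, mul_one, sub_zero] at hw
    refine Prod.ext ?_ ?_
    · simp [hZdef]; ring
    · simp [hZdef]; linear_combination hw
  have hUZ : ∀ lam, Δ₁ lam = -U₁.app (Z lam) := by
    intro lam
    have h1 := hUg.lin (fun x => (-(B lam T).1) • A lam x) (B lam)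
      ((hA lam).cont.fun_const_smul _) (hB lam).cont ((A lam T).1)
    have h2 := hUg.lin (fun _ => 0) (A lam) continuousOn_const (hA lam).cont (-(B lam T).1)
    have h3 : U₁.app (fun _ => 0) = 0 := by simp [NonlocalForm.app]
    simp only [zero_add, h3] at h2
    rw [hΔ, hZdef]
    simp only
    rw [h1, h2]; ring
  obtain ⟨K, c, hK, hc, hlow⟩ := app_lower hT hM0 hM U₁ hh
  have hlow' : ∀ z : ℂ, K ≤ z.im → c * Real.exp (z.im * T) ≤ ‖Δ₁ z‖ := by
    intro z hz
    rw [hUZ, norm_neg]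
    exact hlow z hz _ (hZ z) (hZT z)
  have hbd : ∀ S : ℝ, ∃ R, ∀ z : ℂ, |z.im| ≤ S → ‖Δ₁ z‖ ≤ R := by
    intro S
    obtain ⟨C, hC, hCb⟩ := hUg.bdd
    refine ⟨C * Real.exp ((S + M) * T), fun z hz => ?_⟩
    rw [hUZ, norm_neg]
    refine hCb _ _ (hZ z).cont fun x hx => ?_
    have h1 := (hZ z).norm_le hM hx hTm zero_le_one (by simp [hZT])
    rw [one_mul, abs_of_nonpos (by linarith [hx.2] : x - T ≤ 0)] at h1
    refine h1.trans (Real.exp_le_exp.2 ?_)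
    have h2 : 0 ≤ |z.im| := abs_nonneg _
    apply mul_le_mul (by linarith) (by linarith [hx.1]) (by linarith [hx.2]) (by linarith)
  intro δ hδ
  obtain ⟨m, hm, hstrip⟩ := strip_lower hΔd hK.le hc hbd (fun z hz => by
    refine le_trans ?_ (hlow' z hz)
    apply le_mul_of_one_le_right hc.le
    apply Real.one_le_exp
    have : 0 ≤ z.im := hK.le.trans hz
    positivity) hδ
  set c' := min c (m * Real.exp (-(K * T))) with hc'
  have hc'0 : 0 < c' := lt_min hc (by positivity)
  have hall : ∀ lam : ℂ, 0 ≤ lam.im → (∀ z : ℂ, Δ₁ z = 0 → δ ≤ dist lam z) →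
      c' * Real.exp (lam.im * T) ≤ ‖Δ₁ lam‖ := by
    intro lam hl hz
    rcases le_total lam.im K with h | h
    · calc c' * Real.exp (lam.im * T) ≤ m * Real.exp (-(K * T)) * Real.exp (K * T) := by
            have := min_le_right c (m * Real.exp (-(K * T)))
            gcongr
        _ = m := by rw [mul_assoc, ← Real.exp_add]; simp
        _ ≤ _ := hstrip lam hl h hz
    · refine le_trans ?_ (hlow' lam h)
      have := min_le_left c (m * Real.exp (-(K * T)))
      gcongr
  refine ⟨Real.exp (M * T) / c', by positivity, fun lam hl hz => ?_⟩
  have hlam := hall lam hl hz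
  have hne : Δ₁ lam ≠ 0 := by
    rw [← norm_pos_iff]
    exact lt_of_lt_of_le (by positivity) hlam
  refine ⟨hne, fun Φ hΦ hUΦ hΦT x hx => ?_⟩
  obtain ⟨φ, hφ, hφΦ⟩ := exists_DSol hT hpc hqc hΦ
  have hφT : (φ T).1 = 0 := by rw [← hφΦ T hTm, hΦT]
  set d := (φ T).2 with hd
  have hφZ : ∀ t ∈ Icc (0 : ℝ) T, φ t = d • Z lam t := by
    intro t ht
    have h1 := ((hφ.comb (hZ lam) 1 (-d)).norm_le hM ht hTm le_rfl (by simp [hZT, hφT, ← hd]))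
    rw [zero_mul, norm_le_zero_iff] at h1
    rw [one_smul, neg_smul] at h1
    exact eq_of_sub_eq_zero (by rw [sub_eq_add_neg]; exact h1)
  have hUd : d * U₁.app (Z lam) = 1 := by
    have h2 := hUg.lin (fun _ => 0) (Z lam) continuousOn_const (hZ lam).cont d
    have h3 : U₁.app (fun _ => 0) = 0 := by simp [NonlocalForm.app]
    simp only [zero_add, h3] at h2
    rw [← h2, ← hUg.congr hφ.cont hφZ, ← hUg.congr hΦ.1 hφΦ, hUΦ]
  have hdn : ‖d‖ * ‖Δ₁ lam‖ = 1 := by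
    rw [hUZ, norm_neg, ← norm_mul, hUd, norm_one]
  have hZx := hbT lam hl _ (hZ lam) (by simp [hZT]) x hx
  rw [hφΦ x hx, hφZ x hx, norm_smul]
  have hdle : ‖d‖ * (c' * Real.exp (lam.im * T)) ≤ 1 :=
    (mul_le_mul_of_nonneg_left hlam (norm_nonneg _)).trans_eq hdn
  have hexp : Real.exp (lam.im * (T - x)) = Real.exp (lam.im * T) * Real.exp (-lam.im * x) := by
    rw [← Real.exp_add]; congr 1; ring
  calc ‖d‖ * ‖Z lam x‖ ≤ ‖d‖ * (Real.exp (M * T) * Real.exp (lam.im * (T - x))) := by gcongr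
    _ = (‖d‖ * (c' * Real.exp (lam.im * T))) * (Real.exp (M * T) / c' * Real.exp (-lam.im * x)) := by
        rw [hexp]; field_simp
    _ ≤ 1 * (Real.exp (M * T) / c' * Real.exp (-lam.im * x)) := by gcongr
    _ = _ := one_mul _
end
end

section
/- Uniqueness step via Hadamard factorization: Let h : ℂ → ℂ be an entire function with h(λ) ≠ 0 for all λ ∈ ℂ, of exponential type, i.e., there exist constants C, A > 0 with |h(λ)| ≤ C e^{A|λ|} for all λ. If h(it) → 1 as t → +∞ along the positive imaginary axis (t real, t → +∞), then h(λ) = 1 for all λ ∈ ℂ. (Consequently, two entire functions of exponential type with the same zeros counted with multiplicity whose quotient tends to 1 along the positive imaginary axis are identical.) -/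
open Filter

/-- **Uniqueness step via Hadamard factorization**: a non-vanishing entire function of
exponential type that tends to `1` along the positive imaginary axis is identically `1`. -/
theorem statement19
    (h : ℂ → ℂ)
    (hdiff : Differentiable ℂ h)
    (hne : ∀ z : ℂ, h z ≠ 0)
    (hgrowth : ∃ C A : ℝ, 0 < C ∧ 0 < A ∧ ∀ z : ℂ, ‖h z‖ ≤ C * Real.exp (A * ‖z‖))
    (hlim : Tendsto (fun t : ℝ => h ((t : ℂ) * Complex.I)) atTop (nhds 1)) :
    ∀ z : ℂ, h z = 1 := by
  obtain ⟨C, A, hC, hA, hb⟩ := hgrowth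
  -- an entire logarithm
  have hd' : Differentiable ℂ (deriv h) := hdiff.deriv
  have hq : Differentiable ℂ (fun z => deriv h z / h z) := fun z =>
    (hd' z).div (hdiff z) (hne z)
  obtain ⟨g, hg0, hg⟩ := (hq.isExactOn_univ).with_val_at 0 (Complex.log (h 0))
  replace hg : ∀ z, HasDerivAt g (deriv h z / h z) z := fun z => hg z (Set.mem_univ z)
  have hgd : Differentiable ℂ g := fun z => (hg z).differentiableAt
  have hexp : ∀ z, h z = Complex.exp (g z) := by
    have hD : ∀ z, HasDerivAt (fun z => h z * Complex.exp (-g z)) 0 z := by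
      intro z
      have h1 := (hdiff z).hasDerivAt.mul ((hg z).neg.cexp)
      refine h1.congr_deriv ?_
      field_simp [hne z]
      simp
    have hconst : ∀ z, h z * Complex.exp (-g z) = h 0 * Complex.exp (-g 0) := fun z =>
      is_const_of_deriv_eq_zero (fun z => (hD z).differentiableAt) (fun z => (hD z).deriv) z 0
    intro z
    have h2 := hconst z
    rw [hg0, Complex.exp_neg, Complex.exp_neg, Complex.exp_log (hne 0),
      mul_inv_cancel₀ (hne 0)] at h2
    exact (mul_inv_eq_one₀ (Complex.exp_ne_zero _)).1 h2
  -- real part bound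
  have hre : ∀ z, (g z).re ≤ Real.log C + A * ‖z‖ := by
    intro z
    have h1 := hb z
    rw [hexp z, Complex.norm_exp] at h1
    rw [← Real.exp_le_exp, Real.exp_add, Real.exp_log hC]
    exact h1
  obtain ⟨K, hK, hK0⟩ : ∃ K : ℝ, Real.log C ≤ K ∧ 0 < K :=
    ⟨|Real.log C| + 1, by linarith [le_abs_self (Real.log C)], by positivity⟩
  -- linear growth
  have hlin : ∀ z, ‖g z‖ ≤ (2 * K + 3 * ‖g 0‖) + 4 * A * ‖z‖ := by
    intro z
    rcases eq_or_ne z 0 with rfl | hz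
    · simp only [norm_zero, mul_zero, add_zero]
      linarith [norm_nonneg (g 0)]
    have hzp : 0 < ‖z‖ := norm_pos_iff.2 hz
    have h1 := Complex.borelCaratheodory (f := g) (z := z) (R := 2 * ‖z‖)
      (M := K + A * (2 * ‖z‖)) (by positivity) hgd.differentiableOn (by
        intro w hw
        have hw' : ‖w‖ < 2 * ‖z‖ := by simpa using hw
        have := hre w
        have h3 : A * ‖w‖ ≤ A * (2 * ‖z‖) := by gcongr
        show (g w).re ≤ _
        linarith) (by positivity) (by simp; linarith)
    refine h1.trans (le_of_eq ?_)
    have : 2 * ‖z‖ - ‖z‖ = ‖z‖ := by ring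
    rw [this]
    field_simp
    ring
  -- the derivative is bounded
  have hbd : ∀ c, ‖deriv g c‖ ≤ (2 * K + 3 * ‖g 0‖) + 8 * A := by
    intro c
    have hR : 0 < 1 + ‖c‖ := by positivity
    have h1 := Complex.norm_deriv_le_of_forall_mem_sphere_norm_le (f := g) (c := c)
      (C := (2 * K + 3 * ‖g 0‖) + 4 * A * (2 * (1 + ‖c‖))) hR hgd.diffContOnCl (by
        intro z hz
        refine (hlin z).trans ?_
        have h2 : ‖z - c‖ = 1 + ‖c‖ := by simpa [dist_eq_norm] using hz
        have h3 : ‖z‖ ≤ ‖z - c‖ + ‖c‖ := norm_le_norm_sub_add z c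
        have h4 : ‖z‖ ≤ 2 * (1 + ‖c‖) := by linarith
        gcongr)
    refine h1.trans ?_
    rw [div_le_iff₀ hR]
    have : 0 ≤ (2 * K + 3 * ‖g 0‖) * ‖c‖ := by positivity
    nlinarith
  obtain ⟨a, ha⟩ := hgd.deriv.exists_const_forall_eq_of_bounded
    (isBounded_iff_forall_norm_le.2 ⟨_, by rintro _ ⟨c, rfl⟩; exact hbd c⟩)
  have hD2 : ∀ z, HasDerivAt (fun z => g z - a * z) 0 z := by
    intro z
    have h1 := (hgd z).hasDerivAt.sub ((hasDerivAt_id z).const_mul a)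
    rw [ha z] at h1
    refine h1.congr_deriv ?_
    simp
  have hform : ∀ z, g z = a * z + g 0 := by
    intro z
    have h1 := is_const_of_deriv_eq_zero (fun z => (hD2 z).differentiableAt)
      (fun z => (hD2 z).deriv) z 0
    simp only [mul_zero, sub_zero] at h1
    rw [← h1]; ring
  -- use the limit
  have hone : ∀ s : ℝ, Complex.exp ((s : ℂ) * (a * Complex.I)) = 1 := by
    intro s
    have h1 : Tendsto (fun t : ℝ => h (((t + s : ℝ) : ℂ) * Complex.I)) atTop (nhds 1) :=
      hlim.comp (tendsto_atTop_add_const_right atTop s tendsto_id)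
    have h2 : Tendsto (fun t : ℝ => h ((t : ℂ) * Complex.I) *
        Complex.exp ((s : ℂ) * (a * Complex.I))) atTop
        (nhds (1 * Complex.exp ((s : ℂ) * (a * Complex.I)))) := hlim.mul_const _
    have h3 : (fun t : ℝ => h (((t + s : ℝ) : ℂ) * Complex.I)) = fun t : ℝ =>
        h ((t : ℂ) * Complex.I) * Complex.exp ((s : ℂ) * (a * Complex.I)) := by
      funext t
      rw [hexp, hexp, hform, hform ((t : ℂ) * Complex.I), ← Complex.exp_add]
      congr 1
      push_cast
      ring
    rw [h3] at h1
    simpa using tendsto_nhds_unique h2 h1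
  have ha0 : a = 0 := by
    have h1 : HasDerivAt (fun s : ℝ => Complex.exp ((s : ℂ) * (a * Complex.I)))
        (a * Complex.I) 0 := by
      have := ((Complex.ofRealCLM.hasDerivAt (x := (0 : ℝ))).mul_const (a * Complex.I)).cexp
      simpa using this
    have h2 : HasDerivAt (fun s : ℝ => Complex.exp ((s : ℂ) * (a * Complex.I))) 0 0 := by
      rw [funext hone]
      exact hasDerivAt_const _ _
    simpa using h1.unique h2
  have hc : ∀ z, h z = h 0 := by
    intro z
    rw [hexp, hexp 0, hform z, ha0]
    simp
  have h0 : h 0 = 1 := by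
    have h1 : (fun t : ℝ => h ((t : ℂ) * Complex.I)) = fun _ => h 0 := funext fun t => hc _
    rw [h1] at hlim
    exact tendsto_nhds_unique tendsto_const_nhds hlim
  intro z
  rw [hc z, h0]
end
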